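/- Let δ > 0, c_A > 0, c_B > 0, let F be the Hüsler–Reiss bivariate distribution function with parameter δ, and for m > 1 let a_m = −1/log(1 − 1/m) (so that m(1 − e^{−1/a_m}) = 1). Define the pre-asymptotic extremogram ρ_m = τ_m / p_m, where τ_m = m[ 1 − e^{−1/(c_A a_m)} − e^{−1/(c_B a_m)} + F(a_m c_A, a_m c_B) ] and p_m = m(1 − e^{−1/(c_A a_m)}), and let ρ = c_A [ (1/c_A) Φ̄( log(c_B/c_A)/(2√δ) + √δ ) + (1/c_B) Φ̄( log(c_A/c_B)/(2√δ) + √δ ) ]. Then there is a constant K such that |ρ_m − ρ| ≤ K/m for all sufficiently large m; consequently, for any positive sequences (S_n), (λ_n), (m_n) with m_n → ∞ and S_n λ_n² / m_n³ → 0, one has √(S_n λ_n² / m_n) · |ρ_{m_n} − ρ| → 0. -/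

import Mathlib

open MeasureTheory Filter Real

/-- The standard normal cumulative distribution function. -/
noncomputable def stdNormalCDF (x : ℝ) : ℝ :=
  (Real.sqrt (2 * Real.pi))⁻¹ * ∫ t in Set.Iic x, Real.exp (-t ^ 2 / 2)

/-- `Φ̄ = 1 - Φ`. -/
noncomputable def stdNormalTail (x : ℝ) : ℝ := 1 - stdNormalCDF x

/-- The Hüsler–Reiss bivariate distribution function with parameter `δ`. -/
noncomputable def huslerReiss (δ y₁ y₂ : ℝ) : ℝ :=
  Real.exp
    (-(1 / y₁) * stdNormalCDF (Real.log (y₂ / y₁) / (2 * Real.sqrt δ) + Real.sqrt δ)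
      - (1 / y₂) * stdNormalCDF (Real.log (y₁ / y₂) / (2 * Real.sqrt δ) + Real.sqrt δ))

/-- `a_m = −1/log(1−1/m)`. -/
noncomputable def aSeq (m : ℝ) : ℝ := -1 / Real.log (1 - 1 / m)

/-- `τ_m = m[1 − e^{−1/(c_A a_m)} − e^{−1/(c_B a_m)} + F(a_m c_A, a_m c_B)]`. -/
noncomputable def tauPA (δ cA cB m : ℝ) : ℝ :=
  m * (1 - Real.exp (-1 / (cA * aSeq m)) - Real.exp (-1 / (cB * aSeq m))
    + huslerReiss δ (aSeq m * cA) (aSeq m * cB))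

/-- `p_m = m(1 − e^{−1/(c_A a_m)})`. -/
noncomputable def pPA (cA m : ℝ) : ℝ := m * (1 - Real.exp (-1 / (cA * aSeq m)))

/-- The pre-asymptotic extremogram `ρ_m = τ_m / p_m`. -/
noncomputable def rhoPA (δ cA cB m : ℝ) : ℝ := tauPA δ cA cB m / pPA cA m

/-- The limiting extremogram
`ρ = c_A [(1/c_A) Φ̄(log(c_B/c_A)/(2√δ)+√δ) + (1/c_B) Φ̄(log(c_A/c_B)/(2√δ)+√δ)]`. -/
noncomputable def rhoLimit (δ cA cB : ℝ) : ℝ :=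
  cA * ((1 / cA) * stdNormalTail (Real.log (cB / cA) / (2 * Real.sqrt δ) + Real.sqrt δ)
    + (1 / cB) * stdNormalTail (Real.log (cA / cB) / (2 * Real.sqrt δ) + Real.sqrt δ))

/-!
Put `t = 1/m`, so that `e^{-1/a_m} = 1 - t`. The Hüsler–Reiss law is `F = e^{-V}` with `V`
homogeneous of degree `-1`, so along `(a_m c_A, a_m c_B)` it is a power of `1 - t`, just like the
two margins: with `α = 1/c_A`, `β = 1/c_B` and `γ = V(c_A, c_B)`,
`ρ_m = (1 - (1 - t)^α - (1 - t)^β + (1 - t)^γ) / (1 - (1 - t)^α)`.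
This is a quotient of two analytic functions of `t` vanishing at `0`, and the zero of the
denominator is simple. Such a quotient extends analytically across `0`, with value the quotient
`(α + β - γ)/α = ρ` of the derivatives, and so it differs from `ρ` by `O(t)`.
-/

open Asymptotics Topology

section Quotient

variable {𝕜 E : Type*} [NontriviallyNormedField 𝕜] [NormedAddCommGroup E] [NormedSpace 𝕜 E]

theorem analyticAt_dslope_same {f : 𝕜 → E} {x : 𝕜} (hf : AnalyticAt 𝕜 f x) :
    AnalyticAt 𝕜 (dslope f x) x :=
  let ⟨_, hp⟩ := hf
  hp.has_fpower_series_dslope_fslope.analyticAt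

theorem isBigO_div_sub_deriv_div_deriv {f g : 𝕜 → 𝕜} {x : 𝕜} (hf : AnalyticAt 𝕜 f x)
    (hg : AnalyticAt 𝕜 g x) (hfx : f x = 0) (hgx : g x = 0) (hg' : deriv g x ≠ 0) :
    (fun z => f z / g z - deriv f x / deriv g x) =O[𝓝[≠] x] (· - x) := by
  have hdiff : DifferentiableAt 𝕜 (fun z => dslope f x z / dslope g x z) x :=
    (analyticAt_dslope_same hf).differentiableAt.fun_div
      (analyticAt_dslope_same hg).differentiableAt (by rwa [dslope_same])
  refine (hdiff.isBigO_sub.mono nhdsWithin_le_nhds).congr' ?_ .rfl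
  filter_upwards [self_mem_nhdsWithin] with z hz
  rw [dslope_same, dslope_same, ← sub_smul_dslope_of_zero hfx z, ← sub_smul_dslope_of_zero hgx z,
    smul_eq_mul, smul_eq_mul, mul_div_mul_left _ _ (sub_ne_zero.mpr hz)]

end Quotient

theorem analyticAt_one_sub_rpow (p : ℝ) : AnalyticAt ℝ (fun t : ℝ => (1 - t) ^ p) 0 :=
  ((contDiffAt_const.sub contDiffAt_id).rpow_const_of_ne (by norm_num)).analyticAt

theorem hasDerivAt_one_sub_rpow (p : ℝ) : HasDerivAt (fun t : ℝ => (1 - t) ^ p) (-p) 0 := by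
  simpa using ((hasDerivAt_id (0 : ℝ)).const_sub 1).rpow_const (p := p) (by norm_num)

theorem isBigO_one_sub_rpow_ratio (α β γ : ℝ) (hα : α ≠ 0) :
    (fun t : ℝ => (1 - (1 - t) ^ α - (1 - t) ^ β + (1 - t) ^ γ) / (1 - (1 - t) ^ α)
      - (α + β - γ) / α) =O[𝓝[≠] 0] fun t => t := by
  have hden : HasDerivAt (fun t : ℝ => 1 - (1 - t) ^ α) α 0 := by
    simpa using (hasDerivAt_one_sub_rpow α).const_sub 1
  have hnum : HasDerivAt (fun t : ℝ => 1 - (1 - t) ^ α - (1 - t) ^ β + (1 - t) ^ γ)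
      (α + β - γ) 0 :=
    ((hden.sub (hasDerivAt_one_sub_rpow β)).add (hasDerivAt_one_sub_rpow γ)).congr_deriv (by ring)
  have hden_an : AnalyticAt ℝ (fun t : ℝ => 1 - (1 - t) ^ α) 0 :=
    analyticAt_const.sub (analyticAt_one_sub_rpow α)
  simpa only [hnum.deriv, hden.deriv, sub_zero] using
    isBigO_div_sub_deriv_div_deriv
      ((hden_an.fun_sub (analyticAt_one_sub_rpow β)).fun_add (analyticAt_one_sub_rpow γ)) hden_an
      (by simp) (by simp) (hden.deriv.symm ▸ hα)

/-- The exponent function `V` of the Hüsler–Reiss distribution, defined by `F = e^{-V}`. -/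
noncomputable def huslerReissExponent (δ y₁ y₂ : ℝ) : ℝ :=
  1 / y₁ * stdNormalCDF (Real.log (y₂ / y₁) / (2 * √δ) + √δ)
    + 1 / y₂ * stdNormalCDF (Real.log (y₁ / y₂) / (2 * √δ) + √δ)

theorem huslerReiss_eq_exp_neg_exponent (δ y₁ y₂ : ℝ) :
    huslerReiss δ y₁ y₂ = Real.exp (-huslerReissExponent δ y₁ y₂) := by
  rw [huslerReiss, huslerReissExponent]
  ring_nf

theorem huslerReissExponent_mul_mul {s : ℝ} (hs : s ≠ 0) (δ y₁ y₂ : ℝ) :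
    huslerReissExponent δ (s * y₁) (s * y₂) = s⁻¹ * huslerReissExponent δ y₁ y₂ := by
  simp only [huslerReissExponent, mul_div_mul_left _ _ hs, one_div, mul_inv]
  ring

theorem inv_aSeq (m : ℝ) : (aSeq m)⁻¹ = -Real.log (1 - m⁻¹) := by
  rw [aSeq, inv_div, one_div, div_neg, div_one]

theorem aSeq_pos {m : ℝ} (hm : 1 < m) : 0 < aSeq m := by
  have hinv_lt : m⁻¹ < 1 := inv_lt_one_of_one_lt₀ hm
  have hinv_pos : 0 < m⁻¹ := by positivity
  rw [← inv_pos, inv_aSeq, neg_pos]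
  exact Real.log_neg (by linarith) (by linarith)

theorem exp_neg_inv_aSeq_mul {m : ℝ} (hm : 1 < m) (p : ℝ) :
    Real.exp (-((aSeq m)⁻¹ * p)) = (1 - m⁻¹) ^ p := by
  rw [inv_aSeq, neg_mul, neg_neg, Real.rpow_def_of_pos (sub_pos.mpr (inv_lt_one_of_one_lt₀ hm))]

theorem exp_neg_one_div_mul_aSeq {m : ℝ} (hm : 1 < m) (c : ℝ) :
    Real.exp (-1 / (c * aSeq m)) = (1 - m⁻¹) ^ c⁻¹ := by
  rw [← exp_neg_inv_aSeq_mul hm, neg_div, one_div, mul_inv_rev]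

theorem huslerReiss_aSeq_mul {m : ℝ} (hm : 1 < m) (δ y₁ y₂ : ℝ) :
    huslerReiss δ (aSeq m * y₁) (aSeq m * y₂) = (1 - m⁻¹) ^ huslerReissExponent δ y₁ y₂ := by
  rw [huslerReiss_eq_exp_neg_exponent, huslerReissExponent_mul_mul (aSeq_pos hm).ne',
    exp_neg_inv_aSeq_mul hm]

theorem rhoPA_eq_rpow_ratio {m : ℝ} (hm : 1 < m) (δ cA cB : ℝ) :
    rhoPA δ cA cB m =
      (1 - (1 - m⁻¹) ^ cA⁻¹ - (1 - m⁻¹) ^ cB⁻¹ + (1 - m⁻¹) ^ huslerReissExponent δ cA cB)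
        / (1 - (1 - m⁻¹) ^ cA⁻¹) := by
  rw [rhoPA, tauPA, pPA, mul_div_mul_left _ _ (by positivity), huslerReiss_aSeq_mul hm,
    exp_neg_one_div_mul_aSeq hm, exp_neg_one_div_mul_aSeq hm]

theorem rhoLimit_eq_div (δ cA cB : ℝ) :
    rhoLimit δ cA cB = (cA⁻¹ + cB⁻¹ - huslerReissExponent δ cA cB) / cA⁻¹ := by
  rw [rhoLimit, huslerReissExponent, stdNormalTail, stdNormalTail, div_inv_eq_mul]
  ring

theorem isBigO_rhoPA_sub_rhoLimit (δ cB : ℝ) {cA : ℝ} (hcA : cA ≠ 0) :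
    (fun m => rhoPA δ cA cB m - rhoLimit δ cA cB) =O[atTop] fun m => m⁻¹ := by
  have hinv : Tendsto (fun m : ℝ => m⁻¹) atTop (𝓝[≠] 0) :=
    tendsto_inv_atTop_nhdsGT_zero.mono_right (nhdsGT_le_nhdsNE 0)
  refine ((isBigO_one_sub_rpow_ratio cA⁻¹ cB⁻¹ (huslerReissExponent δ cA cB)
    (inv_ne_zero hcA)).comp_tendsto hinv).congr' ?_ .rfl
  filter_upwards [eventually_gt_atTop 1] with m hm
  rw [rhoPA_eq_rpow_ratio hm, rhoLimit_eq_div, Function.comp_apply]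

theorem tendsto_sqrt_mul_abs_of_isBigO_inv {ι : Type*} {l : Filter ι} {e w m : ι → ℝ}
    (he : e =O[l] fun n => (m n)⁻¹) (hw : Tendsto (fun n => w n / m n ^ 2) l (𝓝 0)) :
    Tendsto (fun n => √(w n) * |e n|) l (𝓝 0) := by
  have hsqrt : Tendsto (fun n => √(w n) * |(m n)⁻¹|) l (𝓝 0) := by
    simpa [Real.sqrt_div', sq_nonneg, Real.sqrt_sq_eq_abs, div_eq_mul_inv, abs_inv] using hw.sqrt
  exact ((isBigO_refl (fun n => √(w n)) l).mul he.abs_abs).trans_tendsto hsqrt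

/-- `|ρ_m − ρ| ≤ K/m` for large `m`; consequently for positive sequences
`S_n, λ_n, m_n` with `m_n → ∞` and `S_n λ_n² / m_n³ → 0` one has
`√(S_n λ_n²/m_n) · |ρ_{m_n} − ρ| → 0`. -/
theorem statement_14 (δ cA cB : ℝ) (hδ : 0 < δ) (hcA : 0 < cA) (hcB : 0 < cB) :
    (∃ K M : ℝ, ∀ m : ℝ, M ≤ m → |rhoPA δ cA cB m - rhoLimit δ cA cB| ≤ K / m)
    ∧ ∀ S lam mseq : ℕ → ℝ,
        (∀ n, 0 < S n) → (∀ n, 0 < lam n) → (∀ n, 0 < mseq n) →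
        Tendsto mseq atTop atTop →
        Tendsto (fun n => S n * lam n ^ 2 / mseq n ^ 3) atTop (nhds 0) →
        Tendsto
          (fun n => Real.sqrt (S n * lam n ^ 2 / mseq n)
            * |rhoPA δ cA cB (mseq n) - rhoLimit δ cA cB|)
          atTop (nhds 0) := by
  have hρ := isBigO_rhoPA_sub_rhoLimit δ cB hcA.ne'
  constructor
  · obtain ⟨K, hK⟩ := hρ.bound
    obtain ⟨M, hM⟩ := eventually_atTop.mp (hK.and (eventually_gt_atTop 0))
    refine ⟨K, M, fun m hm => ?_⟩
    obtain ⟨hbound, hm₀⟩ := hM m hm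
    simpa only [norm_eq_abs, abs_inv, abs_of_pos hm₀, div_eq_mul_inv] using hbound
  · intro S lam mseq _ _ _ hm hS
    refine tendsto_sqrt_mul_abs_of_isBigO_inv (hρ.comp_tendsto hm) (hS.congr fun n => ?_)
    rw [div_div, ← pow_succ']
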